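/- If M is a doubly invariant subspace of RL^2, then there exists a measurable subset E of the unit circle T such that M = 1_E·RL^2, where 1_E denotes the characteristic function of E. -/

import Mathlib

open MeasureTheory Complex

noncomputable section

instance : Fact (0 < 2 * Real.pi) := ⟨Real.two_pi_pos⟩

/-- The unit circle, modelled as `ℝ / 2πℤ`, with normalized Haar (Lebesgue) measure
of total mass `1`. -/
abbrev 𝕋 : Type := AddCircle (2 * Real.pi)

abbrev μT : Measure 𝕋 := AddCircle.haarAddCircle

/-- `RL²`: the set of `f ∈ L²` all of whose Fourier coefficients are real. -/
def RL2 : Set (Lp ℂ 2 μT) :=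
  {f | ∀ n : ℤ, (fourierCoeff (f : 𝕋 → ℂ) n).im = 0}

/-- The image `e^{iθ}·M` of a set `M ⊆ L²` under multiplication by the coordinate function. -/
def shiftSet (M : Set (Lp ℂ 2 μT)) : Set (Lp ℂ 2 μT) :=
  {g | ∃ f ∈ M, (g : 𝕋 → ℂ) =ᵐ[μT] fun t => fourier 1 t * (f : 𝕋 → ℂ) t}

theorem ae_zero_of_fourier (F : 𝕋 → ℂ) (hF : Integrable F μT)
    (h : ∀ n : ℤ, ∫ t, fourier n t * F t ∂μT = 0) : F =ᵐ[μT] 0 := by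
  have hint : ∀ φ : C(𝕋, ℂ), Integrable (fun t => φ t * F t) μT := fun φ =>
    hF.bdd_mul φ.continuous.aestronglyMeasurable (ae_of_all _ fun t => φ.norm_coe_le_norm t)
  let L : C(𝕋, ℂ) →ₗ[ℂ] ℂ :=
    { toFun := fun φ => ∫ t, φ t * F t ∂μT
      map_add' := by
        intro a b
        rw [← integral_add (hint a) (hint b)]
        simp [add_mul]
      map_smul' := by
        intro c a
        simp [mul_assoc, integral_const_mul] }
  let L' : C(𝕋, ℂ) →L[ℂ] ℂ := L.mkContinuous (∫ t, ‖F t‖ ∂μT) (by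
    intro φ
    change ‖∫ t, φ t * F t ∂μT‖ ≤ _
    refine (norm_integral_le_integral_norm _).trans ?_
    rw [← integral_mul_const]
    refine integral_mono (hint φ).norm (hF.norm.mul_const _) fun t => ?_
    simp only [norm_mul]
    rw [mul_comm ‖φ t‖]
    gcongr
    exact φ.norm_coe_le_norm t)
  have hcont : ∀ φ : C(𝕋, ℂ), ∫ t, φ t * F t ∂μT = 0 := by
    intro φ
    have hle : (Submodule.span ℂ (Set.range (@fourier (2 * Real.pi)))).topologicalClosure
        ≤ L'.ker := by
      apply Submodule.topologicalClosure_minimal _ _ L'.isClosed_ker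
      rw [Submodule.span_le]
      rintro _ ⟨n, rfl⟩
      exact h n
    rw [span_fourier_closure_eq_top] at hle
    exact hle (Submodule.mem_top (x := φ))
  apply ae_eq_zero_of_forall_setIntegral_isClosed_eq_zero hF
  intro s hs
  have hlim : Filter.Tendsto (fun n : ℕ => ∫ t, ((hs.apprSeq n t : ℝ) : ℂ) * F t ∂μT) Filter.atTop
      (nhds (∫ t, s.indicator F t ∂μT)) := by
    refine tendsto_integral_of_dominated_convergence (fun t => ‖F t‖) ?_ hF.norm ?_ ?_
    · intro n
      refine AEStronglyMeasurable.mul ?_ hF.1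
      apply Continuous.aestronglyMeasurable
      have := (hs.apprSeq n).continuous
      fun_prop
    · intro n
      refine ae_of_all _ fun t => ?_
      have h1 := HasOuterApproxClosed.apprSeq_apply_le_one hs n t
      rw [norm_mul]
      have : ‖((hs.apprSeq n t : ℝ) : ℂ)‖ ≤ 1 := by
        rw [Complex.norm_real]
        simpa using h1
      exact mul_le_of_le_one_left (norm_nonneg _) this
    · refine ae_of_all _ fun t => ?_
      have h2 := (tendsto_pi_nhds.1 (HasOuterApproxClosed.tendsto_apprSeq hs)) t
      have h3 : Filter.Tendsto (fun n : ℕ => ((hs.apprSeq n t : ℝ) : ℂ) * F t) Filter.atTop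
          (nhds ((((s.indicator (fun _ => (1 : NNReal)) t : NNReal) : ℝ) : ℂ) * F t)) := by
        refine Filter.Tendsto.mul_const _ ?_
        exact ((Complex.continuous_ofReal.comp NNReal.continuous_coe).tendsto _).comp h2
      convert! h3 using 2
      by_cases ht : t ∈ s <;> simp [ht]
  have hz : ∀ n : ℕ, ∫ t, ((hs.apprSeq n t : ℝ) : ℂ) * F t ∂μT = 0 := fun n =>
    hcont ⟨fun t => ((hs.apprSeq n t : ℝ) : ℂ), by
      have := (hs.apprSeq n).continuous
      fun_prop⟩
  rw [← integral_indicator hs.measurableSet]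
  simp only [hz] at hlim
  exact (tendsto_nhds_unique hlim tendsto_const_nhds)

theorem coeff_eq (f : Lp ℂ 2 μT) (n : ℤ) :
    fourierCoeff (f : 𝕋 → ℂ) n = inner ℂ (fourierBasis n) f := by
  rw [← fourierBasis_repr, HilbertBasis.repr_apply_apply]

theorem RL2_sub {f g : Lp ℂ 2 μT} (hf : f ∈ RL2) (hg : g ∈ RL2) : f - g ∈ RL2 := by
  intro n
  have h1 := hf n
  have h2 := hg n
  rw [coeff_eq] at h1 h2 ⊢
  rw [inner_sub_right, Complex.sub_im, h1, h2, sub_zero]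

theorem RL2_inner {f g : Lp ℂ 2 μT} (hf : f ∈ RL2) (hg : g ∈ RL2) : (inner ℂ f g).im = 0 := by
  have h := Complex.hasSum_im (fourierBasis.hasSum_inner_mul_inner f g)
  have h0 : ∀ n : ℤ, (inner ℂ f (fourierBasis n) * inner ℂ (fourierBasis n) g).im = 0 := by
    intro n
    have h1 := hf n
    have h2 := hg n
    rw [coeff_eq] at h1 h2
    rw [← inner_conj_symm, Complex.mul_im, Complex.conj_im, h1, h2]
    simp
  simp only [h0] at h
  exact h.unique hasSum_zero

theorem one_RL2 : (fourierLp 2 0 : Lp ℂ 2 μT) ∈ RL2 := by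
  intro n
  rw [coeff_eq, ← coe_fourierBasis, orthonormal_iff_ite.1 fourierBasis.orthonormal]
  split_ifs <;> simp

theorem real_inner_eq (f g : Lp ℂ 2 μT) : inner ℝ f g = (inner ℂ f g).re := by
  rw [L2.inner_def, L2.inner_def]
  change _ = RCLike.re (K := ℂ) _
  rw [← integral_re (𝕜 := ℂ) (L2.integrable_inner (𝕜 := ℂ) f g)]
  rfl

theorem key {f u : Lp ℂ 2 μT} (hu : u ∈ RL2)
    (h : ∀ n : ℤ, ∃ g ∈ RL2, (g : 𝕋 → ℂ) =ᵐ[μT] (fun t => fourier n t * (f : 𝕋 → ℂ) t) ∧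
      inner ℝ g u = 0) :
    ∀ᵐ t ∂μT, (f : 𝕋 → ℂ) t = 0 ∨ (u : 𝕋 → ℂ) t = 0 := by
  have hz := ae_zero_of_fourier (fun t => inner ℂ ((f : 𝕋 → ℂ) t) ((u : 𝕋 → ℂ) t))
    (L2.integrable_inner f u) (by
      intro n
      obtain ⟨g, hg, hgf, hgu⟩ := h (-n)
      have h0 : inner ℂ g u = 0 := by
        apply Complex.ext
        · rw [← real_inner_eq, hgu]; rfl
        · rw [RL2_inner hg hu]; rfl
      rw [L2.inner_def] at h0
      rw [← h0]
      refine integral_congr_ae ?_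
      filter_upwards [hgf] with t ht
      rw [ht]
      simp only [RCLike.inner_apply, map_mul, fourier_neg, Complex.conj_conj]
      ring)
  filter_upwards [hz] with t ht
  simp only [RCLike.inner_apply, Pi.zero_apply, mul_eq_zero, map_eq_zero] at ht
  tauto

theorem shift_mem (M : Submodule ℝ (Lp ℂ 2 μT))
    (hMinv : shiftSet (M : Set (Lp ℂ 2 μT)) = (M : Set (Lp ℂ 2 μT)))
    {f : Lp ℂ 2 μT} (hf : f ∈ M) (n : ℤ) :
    ∃ g ∈ M, (g : 𝕋 → ℂ) =ᵐ[μT] fun t => fourier n t * (f : 𝕋 → ℂ) t := by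
  induction n using Int.induction_on with
  | zero => exact ⟨f, hf, ae_of_all _ fun t => by simp⟩
  | succ k ih =>
    obtain ⟨g, hg, hgf⟩ := ih
    have hmem : MemLp (fun t => fourier 1 t * (g : 𝕋 → ℂ) t) 2 μT := by
      refine (Lp.memLp g).of_le
        ((fourier 1).continuous.aestronglyMeasurable.mul (Lp.aestronglyMeasurable g)) ?_
      refine ae_of_all _ fun t => ?_
      rw [norm_mul, fourier_apply, Circle.norm_coe, one_mul]
    refine ⟨hmem.toLp _, ?_, ?_⟩
    · have : hmem.toLp _ ∈ shiftSet (M : Set (Lp ℂ 2 μT)) := ⟨g, hg, hmem.coeFn_toLp⟩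
      rwa [hMinv] at this
    · filter_upwards [hmem.coeFn_toLp, hgf] with t h1 h2
      rw [h1, h2, add_comm, fourier_add, mul_assoc]
  | pred k ih =>
    obtain ⟨g, hg, hgf⟩ := ih
    have hg' : g ∈ shiftSet (M : Set (Lp ℂ 2 μT)) := by rw [hMinv]; exact hg
    obtain ⟨g', hg', hgg⟩ := hg'
    refine ⟨g', hg', ?_⟩
    filter_upwards [hgg, hgf] with t h1 h2
    have h3 : (fourier (-1) t : ℂ) * fourier 1 t = 1 := by
      rw [← fourier_add]; simp
    rw [sub_eq_neg_add, fourier_add, mul_assoc, ← h2, h1, ← mul_assoc, h3, one_mul]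

/-- If `M` is a doubly invariant subspace of `RL²` (a closed real subspace of `L²` contained
in `RL²` with `e^{iθ}M = M`), then `M = 1_E·RL²` for some measurable subset `E` of the
circle, where `1_E` is the characteristic function of `E`. -/
theorem doubly_invariant_subspace_RL2
    (M : Submodule ℝ (Lp ℂ 2 μT))
    (hMsub : (M : Set (Lp ℂ 2 μT)) ⊆ RL2)
    (hMclosed : IsClosed (M : Set (Lp ℂ 2 μT)))
    (hMinv : shiftSet (M : Set (Lp ℂ 2 μT)) = (M : Set (Lp ℂ 2 μT))) :
    ∃ E : Set 𝕋, MeasurableSet E ∧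
      (M : Set (Lp ℂ 2 μT)) =
        {g : Lp ℂ 2 μT | ∃ h ∈ RL2, (g : 𝕋 → ℂ) =ᵐ[μT]
          fun t => E.indicator (fun _ => (1 : ℂ)) t * (h : 𝕋 → ℂ) t} := by
  have : CompleteSpace M := hMclosed.completeSpace_coe
  have hkey : ∀ f ∈ M, ∀ v ∈ RL2, ∀ᵐ t ∂μT, (f : 𝕋 → ℂ) t = 0 ∨
      (v : 𝕋 → ℂ) t = (M.starProjection v : Lp ℂ 2 μT) t := by
    intro f hf v hv
    have h := key (f := f) (u := v - M.starProjection v)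
      (RL2_sub hv (hMsub (M.starProjection_apply_mem v))) (by
        intro n
        obtain ⟨g, hg, hgf⟩ := shift_mem M hMinv hf n
        exact ⟨g, hMsub hg, hgf,
          (Submodule.mem_orthogonal _ _).1 (M.sub_starProjection_mem_orthogonal v) g hg⟩)
    filter_upwards [h, Lp.coeFn_sub v (M.starProjection v)] with t h1 h2
    rw [h2, Pi.sub_apply, sub_eq_zero] at h1
    exact h1
  set q : Lp ℂ 2 μT := M.starProjection (fourierLp 2 0) with hq
  have hqM : q ∈ M := M.starProjection_apply_mem _
  have h1q : ∀ f ∈ M, ∀ᵐ t ∂μT, (f : 𝕋 → ℂ) t = 0 ∨ (q : 𝕋 → ℂ) t = 1 := by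
    intro f hf
    filter_upwards [hkey f hf _ one_RL2, coeFn_fourierLp (T := 2 * Real.pi) 2 0] with t h1 h2
    rw [h2, fourier_zero] at h1
    exact h1.imp id Eq.symm
  refine ⟨{t | (q : 𝕋 → ℂ) t = 1},
    (Lp.stronglyMeasurable q).measurable (measurableSet_singleton 1), ?_⟩
  ext g
  constructor
  · intro hg
    refine ⟨g, hMsub hg, ?_⟩
    filter_upwards [h1q g hg] with t ht
    by_cases hE : (q : 𝕋 → ℂ) t = 1
    · simp [hE]
    · simp [hE, ht.resolve_right hE]
  · rintro ⟨h, hh, hgh⟩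
    have hpM : M.starProjection h ∈ M := M.starProjection_apply_mem h
    have : g = M.starProjection h := by
      apply Lp.ext
      filter_upwards [hgh, h1q _ hpM, hkey q hqM h hh] with t h1 h2 h3
      rw [h1]
      by_cases hE : (q : 𝕋 → ℂ) t = 1
      · rw [hE] at h3
        simp [hE, h3.resolve_left one_ne_zero]
      · simp [hE, h2.resolve_right hE]
    rw [this]
    exact hpM

end
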